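/- Tail bound for the normalized log-value at 1: let X_n = (1/n²) log((ξ_0 + ξ_1 + … + ξ_n)/ξ_n). Then for every B > 0 there exists n_0 such that for all n ≥ n_0, P(|X_n| > B) ≤ 20 n e^{−B n²}; moreover P(X_n ≤ −1) = 0 for all n sufficiently large. -/

import Mathlib

open MeasureTheory ProbabilityTheory Filter Polynomial
open scoped ENNReal NNReal Classical

noncomputable section

/-- Polynomials of positive degree with all coefficients real and strictly positive. -/
def polPos (p : Polynomial ℂ) : Prop :=
  0 < p.natDegree ∧ ∀ i ≤ p.natDegree, (p.coeff i).im = 0 ∧ 0 < (p.coeff i).re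

/-- Empirical measure of the zeros of a polynomial (counted with multiplicity). -/
def zeroMeasure (p : Polynomial ℂ) : Measure ℂ :=
  (p.natDegree : ℝ≥0∞)⁻¹ • (p.roots.map MeasureTheory.Measure.dirac).sum

/-- The closure of the set of empirical zero measures of polynomials with positive
coefficients, inside the space of probability measures with the weak topology. -/
def calP : Set (ProbabilityMeasure ℂ) :=
  closure {μ : ProbabilityMeasure ℂ |
    ∃ p : Polynomial ℂ, polPos p ∧ (μ : Measure ℂ) = zeroMeasure p}

/-- The kernel f(z,w) = log|1-z| + log|1-w| - log|z-w|. -/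
def fker (z w : ℂ) : ℝ :=
  Real.log ‖1 - z‖ + Real.log ‖1 - w‖
    - Real.log ‖z - w‖

/-- The double integral ∬ f dμ dμ, as an extended real number: the (Lebesgue)
integral of the positive part minus that of the negative part. -/
def doubleInt (μ : Measure ℂ) : EReal :=
  ((∫⁻ q : ℂ × ℂ, ENNReal.ofReal (fker q.1 q.2) ∂(μ.prod μ) : ℝ≥0∞) : EReal)
    - ((∫⁻ q : ℂ × ℂ, ENNReal.ofReal (-(fker q.1 q.2)) ∂(μ.prod μ) : ℝ≥0∞) : EReal)

/-- The large deviations rate function. -/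
def rateI (μ : ProbabilityMeasure ℂ) : EReal :=
  if μ ∈ calP then (2 : EReal)⁻¹ * doubleInt (μ : Measure ℂ) else ⊤

end

theorem expM_le (s : Set ℝ) (hs : MeasurableSet s) :
    ProbabilityTheory.expMeasure 1 s ≤ volume (s ∩ Set.Ici 0) := by
  have h1 : ProbabilityTheory.expMeasure 1 s = ∫⁻ x in s, exponentialPDF 1 x :=
    withDensity_apply _ hs
  rw [h1, ← setLIntegral_one, ← lintegral_indicator hs,
    ← lintegral_indicator (hs.inter measurableSet_Ici)]
  apply lintegral_mono
  intro x
  by_cases hx : x ∈ s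
  · by_cases h0 : 0 ≤ x
    · rw [Set.indicator_of_mem hx, Set.indicator_of_mem (Set.mem_inter hx (Set.mem_Ici.mpr h0)),
        exponentialPDF_of_nonneg h0]
      rw [ENNReal.ofReal_le_one]
      simpa using h0
    · rw [Set.indicator_of_mem hx, exponentialPDF_of_neg (not_le.mp h0)]
      exact zero_le
  · rw [Set.indicator_of_notMem hx]
    exact zero_le

theorem expM_mean : ∫⁻ x, ENNReal.ofReal x ∂(ProbabilityTheory.expMeasure 1) ≤ 4 := by
  have hm : Measurable (exponentialPDF 1) := (measurable_exponentialPDFReal 1).ennreal_ofReal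
  have h1 : ProbabilityTheory.expMeasure 1 = volume.withDensity (exponentialPDF 1) := rfl
  rw [h1, lintegral_withDensity_eq_lintegral_mul _ hm ENNReal.measurable_ofReal]
  have h2 : ∫⁻ x, 4 * exponentialPDF (1/2) x = 4 := by
    rw [lintegral_const_mul', lintegral_exponentialPDF_eq_one (by norm_num), mul_one]
    norm_num
  refine le_trans (lintegral_mono ?_) h2.le
  intro x
  simp only [Pi.mul_apply]
  by_cases h0 : 0 ≤ x
  · rw [exponentialPDF_of_nonneg h0, exponentialPDF_of_nonneg h0,
      ← ENNReal.ofReal_mul (by positivity),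
      show (4 : ℝ≥0∞) = ENNReal.ofReal 4 by norm_num, ← ENNReal.ofReal_mul (by positivity)]
    apply ENNReal.ofReal_le_ofReal
    have e1 : Real.exp (-(1 * x)) = Real.exp (-(1/2 * x)) * Real.exp (-(1/2 * x)) := by
      rw [← Real.exp_add]; ring_nf
    have e2 : Real.exp (-(1/2 * x)) * Real.exp (x / 2) = 1 := by
      rw [← Real.exp_add]; ring_nf; exact Real.exp_zero
    have e3 := Real.add_one_le_exp (x / 2)
    have e4 := Real.exp_pos (-(1/2 * x))
    rw [e1]
    nlinarith [mul_le_mul_of_nonneg_left e3 e4.le]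
  · rw [exponentialPDF_of_neg (not_le.mp h0)]
    simp

theorem tail_core {Ω : Type*} [MeasurableSpace Ω] (P : Measure Ω) [IsProbabilityMeasure P]
    (ξ : ℕ → Ω → ℝ) (hmeas : ∀ j, Measurable (ξ j))
    (hindep : iIndepFun ξ P)
    (hdist : ∀ j, Measure.map (ξ j) P = ProbabilityTheory.expMeasure 1)
    (n : ℕ) (c : ℝ) (hc : 0 < c) :
    P {ω | c * ξ n ω < ∑ j ∈ Finset.range n, ξ j ω} ≤ ENNReal.ofReal (4 * n / c) := by
  have hT : Measurable (∑ j ∈ Finset.range n, ξ j) := by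
    have h := Finset.measurable_sum (Finset.range n) (fun j _ => hmeas j)
    convert h using 1
    ext ω
    simp
  have hi : IndepFun (∑ j ∈ Finset.range n, ξ j) (ξ n) P :=
    hindep.indepFun_finsetSum_of_notMem hmeas (by simp)
  have hmap := (indepFun_iff_map_prod_eq_prod_map_map hT.aemeasurable (hmeas n).aemeasurable).1 hi
  have hS : MeasurableSet {q : ℝ × ℝ | c * q.2 < q.1} :=
    measurableSet_lt (measurable_snd.const_mul c) measurable_fst
  have e1 : P {ω | c * ξ n ω < ∑ j ∈ Finset.range n, ξ j ω}
      = P.map (fun ω => ((∑ j ∈ Finset.range n, ξ j) ω, ξ n ω)) {q : ℝ × ℝ | c * q.2 < q.1} := by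
    rw [Measure.map_apply (hT.prodMk (hmeas n)) hS]
    congr 1
    ext ω
    simp
  haveI : IsProbabilityMeasure (ProbabilityTheory.expMeasure 1) :=
    isProbabilityMeasure_expMeasure one_pos
  rw [e1, hmap, hdist, Measure.prod_apply hS]
  have hc' : ENNReal.ofReal c⁻¹ ≠ ⊤ := ENNReal.ofReal_ne_top
  calc ∫⁻ t, ProbabilityTheory.expMeasure 1 (Prod.mk t ⁻¹' {q : ℝ × ℝ | c * q.2 < q.1})
        ∂(P.map (∑ j ∈ Finset.range n, ξ j))
      ≤ ∫⁻ t, ENNReal.ofReal c⁻¹ * ENNReal.ofReal t ∂(P.map (∑ j ∈ Finset.range n, ξ j)) := by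
        apply lintegral_mono
        intro t
        refine (expM_le _ (measurable_prodMk_left hS)).trans ?_
        have : (Prod.mk t ⁻¹' {q : ℝ × ℝ | c * q.2 < q.1}) ∩ Set.Ici 0
            ⊆ Set.Ico 0 (c⁻¹ * t) := by
          rintro x ⟨hx, h0⟩
          refine ⟨h0, ?_⟩
          have hx' : c * x < t := hx
          rw [inv_mul_eq_div, lt_div_iff₀ hc]
          linarith
        refine (measure_mono this).trans ?_
        rw [Real.volume_Ico, sub_zero, ENNReal.ofReal_mul (by positivity)]
    _ = ENNReal.ofReal c⁻¹ * ∫⁻ ω, ENNReal.ofReal (∑ j ∈ Finset.range n, ξ j ω) ∂P := by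
        rw [lintegral_const_mul' _ _ hc', lintegral_map ENNReal.measurable_ofReal hT]
        simp
    _ ≤ ENNReal.ofReal c⁻¹ * ∫⁻ ω, ∑ j ∈ Finset.range n, ENNReal.ofReal (ξ j ω) ∂P := by
        gcongr with ω
        exact Finset.le_sum_of_subadditive _ ENNReal.ofReal_zero.le
          (fun _ _ => ENNReal.ofReal_add_le) _ _
    _ ≤ ENNReal.ofReal c⁻¹ * (n * 4) := by
        gcongr
        rw [lintegral_finsetSum _ (fun j _ => (hmeas j).ennreal_ofReal)]
        refine (Finset.sum_le_card_nsmul _ _ 4 ?_).trans (by simp)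
        intro j _
        rw [← lintegral_map ENNReal.measurable_ofReal (hmeas j), hdist]
        exact expM_mean
    _ = ENNReal.ofReal (4 * n / c) := by
        rw [show 4 * (n : ℝ) / c = c⁻¹ * (n * 4) by field_simp,
          ENNReal.ofReal_mul (by positivity), ENNReal.ofReal_mul (by positivity)]
        simp

theorem ae_pos' {Ω : Type*} [MeasurableSpace Ω] (P : Measure Ω)
    (ξ : ℕ → Ω → ℝ) (hmeas : ∀ j, Measurable (ξ j))
    (hdist : ∀ j, Measure.map (ξ j) P = ProbabilityTheory.expMeasure 1) :
    ∀ᵐ ω ∂P, ∀ j, 0 < ξ j ω := by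
  rw [ae_all_iff]
  intro j
  rw [ae_iff]
  have : P (ξ j ⁻¹' Set.Iic 0) = 0 := by
    rw [← Measure.map_apply (hmeas j) measurableSet_Iic, hdist]
    refine le_antisymm ((expM_le _ measurableSet_Iic).trans ?_) zero_le
    simp [Set.Iic_inter_Ici]
  convert this using 2
  ext ω
  simp

/-- Tail bound for the normalized log-value at `1`: with
`X_n = (1/n²) log((ξ₀ + … + ξ_n)/ξ_n)` for i.i.d. exponential(1) coefficients
`ξ_j`, for every `B > 0` one has `P(|X_n| > B) ≤ 20 n e^{-B n²}` for all large `n`,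
and `P(X_n ≤ -1) = 0` for all large `n`. -/
theorem Xn_tail_bound
    {Ω : Type*} [MeasurableSpace Ω] (P : Measure Ω) [IsProbabilityMeasure P]
    (ξ : ℕ → Ω → ℝ) (hmeas : ∀ j, Measurable (ξ j))
    (hindep : iIndepFun ξ P)
    (hdist : ∀ j, Measure.map (ξ j) P = ProbabilityTheory.expMeasure 1) :
    (∀ B : ℝ, 0 < B → ∃ n₀ : ℕ, ∀ n ≥ n₀,
      P {ω | B <
          |(((n : ℝ) ^ 2)⁻¹ *
            Real.log ((∑ j ∈ Finset.range (n + 1), ξ j ω) / ξ n ω))|} ≤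
        ENNReal.ofReal (20 * n * Real.exp (-B * (n : ℝ) ^ 2))) ∧
    ∃ n₁ : ℕ, ∀ n ≥ n₁,
      P {ω | (((n : ℝ) ^ 2)⁻¹ *
          Real.log ((∑ j ∈ Finset.range (n + 1), ξ j ω) / ξ n ω)) ≤ -1} = 0 := by
  have hpos := ae_pos' P ξ hmeas hdist
  have hratio : ∀ n ω, (∀ j, 0 < ξ j ω) →
      0 ≤ Real.log ((∑ j ∈ Finset.range (n + 1), ξ j ω) / ξ n ω) := by
    intro n ω h
    apply Real.log_nonneg
    rw [one_le_div (h n), Finset.sum_range_succ]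
    have := Finset.sum_nonneg (fun j (_ : j ∈ Finset.range n) => (h j).le)
    linarith
  refine ⟨?_, 0, ?_⟩
  · intro B hB
    obtain ⟨m, hm⟩ := exists_nat_gt (1 / B)
    refine ⟨m + 1, fun n hn => ?_⟩
    have hn1 : (1 : ℝ) ≤ n := by exact_mod_cast (by omega : 1 ≤ n)
    have hmn : (m : ℝ) ≤ n := by exact_mod_cast (by omega : m ≤ n)
    have hBn : 1 ≤ B * n := by
      have : 1 / B < n := hm.trans_le hmn
      rw [div_lt_iff₀ hB] at this
      linarith
    have hBn2 : 1 ≤ B * (n : ℝ) ^ 2 := by nlinarith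
    have hK : 2 ≤ Real.exp (B * (n : ℝ) ^ 2) := by
      have := Real.add_one_le_exp (B * (n : ℝ) ^ 2)
      linarith
    set K := Real.exp (B * (n : ℝ) ^ 2) with hKdef
    have hle : P {ω | B < |(((n : ℝ) ^ 2)⁻¹ *
            Real.log ((∑ j ∈ Finset.range (n + 1), ξ j ω) / ξ n ω))|}
        ≤ P {ω | (K - 1) * ξ n ω < ∑ j ∈ Finset.range n, ξ j ω} := by
      apply measure_mono_ae
      filter_upwards [hpos] with ω h hω
      have hω' : B < |(((n : ℝ) ^ 2)⁻¹ *
            Real.log ((∑ j ∈ Finset.range (n + 1), ξ j ω) / ξ n ω))| := hω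
      rw [abs_of_nonneg (mul_nonneg (by positivity) (hratio n ω h)), inv_mul_eq_div,
        lt_div_iff₀ (by positivity)] at hω'
      have hS : 0 < ∑ j ∈ Finset.range (n + 1), ξ j ω :=
        Finset.sum_pos (fun j _ => h j) (by simp)
      rw [Real.lt_log_iff_exp_lt (div_pos hS (h n)), lt_div_iff₀ (h n),
        Finset.sum_range_succ] at hω'
      change (K - 1) * ξ n ω < ∑ j ∈ Finset.range n, ξ j ω
      linarith
    refine hle.trans ((tail_core P ξ hmeas hindep hdist n (K - 1) (by linarith)).trans ?_)
    apply ENNReal.ofReal_le_ofReal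
    rw [neg_mul, Real.exp_neg, ← hKdef, ← div_eq_mul_inv, div_le_div_iff₀ (by linarith)
      (by linarith)]
    nlinarith
  · intro n _
    have h0 : ∀ᵐ ω ∂P, ¬ ((((n : ℝ) ^ 2)⁻¹ *
          Real.log ((∑ j ∈ Finset.range (n + 1), ξ j ω) / ξ n ω)) ≤ -1) := by
      filter_upwards [hpos] with ω h
      have := mul_nonneg (by positivity : 0 ≤ ((n : ℝ) ^ 2)⁻¹) (hratio n ω h)
      linarith
    rw [ae_iff] at h0
    simpa only [not_not] using h0
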